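/- arXiv:1309.2123 — 4 statements merged into one kernel-verified Lean document; each statement's English description precedes it below -/
import Mathlib

section
/- Consider the second-order recurrence T_{n+1}(x) = (x + (α²−β² −(2n+2c+α+β)(2n+2c+α+β+2))/(2(2n+2c+α+β)(2n+2c+α+β+2))) T_n(x) − ((n+c)(n+c+α)(n+c+β)(n+c+α+β)/((2n+2c+α+β−1)(2n+2c+α+β)²(2n+2c+α+β+1))) T_{n−1}(x), and the recurrence T_{n+1}(x) = (x − (7+36(2n+1)(2n+3))/(72(2n+1)(2n+3))) T_n(x) − ((n−1/12)(n+5/12)(n+7/12)(n+13/12)/((2n)(2n+1)²(2n+2))) T_{n−1}(x). For real parameters (α,β,c), the coefficients of these two recurrences agree for every integer n ≥ 1 if and only if (α,β,c) is one of the four triples (−1/2, −2/3, 13/12), (1/2, −2/3, 7/12), (−1/2, 2/3, 5/12), (1/2, 2/3, −1/12). -/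
noncomputable section

/-- Additive coefficient of `T_n` (the part added to `x`) in the associated Jacobi
recurrence `T_{n+1}(x) = (x + jacA n) T_n(x) - jacB n T_{n-1}(x)`. -/
def jacA (α β c : ℝ) (n : ℕ) : ℝ :=
  (α^2 - β^2 - (2*(n:ℝ) + 2*c + α + β) * (2*(n:ℝ) + 2*c + α + β + 2))
    / (2 * (2*(n:ℝ) + 2*c + α + β) * (2*(n:ℝ) + 2*c + α + β + 2))

/-- Coefficient of `T_{n-1}` in the associated Jacobi recurrence. -/
def jacB (α β c : ℝ) (n : ℕ) : ℝ :=
  ((n:ℝ) + c) * ((n:ℝ) + c + α) * ((n:ℝ) + c + β) * ((n:ℝ) + c + α + β)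
    / ((2*(n:ℝ) + 2*c + α + β - 1) * (2*(n:ℝ) + 2*c + α + β)^2 * (2*(n:ℝ) + 2*c + α + β + 1))

/-- Additive coefficient of `T_n` in the Atkin-type recurrence
`T_{n+1}(x) = (x - (7+36(2n+1)(2n+3))/(72(2n+1)(2n+3))) T_n(x) - atkB n T_{n-1}(x)`,
written as the part added to `x`. -/
def atkA (n : ℕ) : ℝ :=
  -((7 + 36 * (2*(n:ℝ) + 1) * (2*(n:ℝ) + 3)) / (72 * (2*(n:ℝ) + 1) * (2*(n:ℝ) + 3)))

/-- Coefficient of `T_{n-1}` in the Atkin-type recurrence. -/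
def atkB (n : ℕ) : ℝ :=
  ((n:ℝ) - 1/12) * ((n:ℝ) + 5/12) * ((n:ℝ) + 7/12) * ((n:ℝ) + 13/12)
    / ((2*(n:ℝ)) * (2*(n:ℝ) + 1)^2 * (2*(n:ℝ) + 2))

/-!
In terms of `u = 2n + 2c + α + β`, the coefficient `jacA` is `-1/2 + (α² - β²) / (2u(u + 2))`, and
`jacB` is a function of `u`, `α² - β²` and `α² + β²`. So the recurrence depends only on the
invariants `2c + α + β`, `α²` and `β²`. Conversely, when `α² ≠ β²`, comparing rational functions of
`n` recovers `2c + α + β` and `α² - β²` from `jacA`, after which a single value of `jacB` gives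
`α² + β²`. The Atkin-type recurrence is the case `(α, β, c) = (1/2, 2/3, -1/12)`, and the
sign changes of `α` and `β` produce the four triples.
-/

/-- The denominators of `jacA α β c n` and `jacB α β c n` do not vanish for `n ≥ 1`. -/
def JacDenNeZero (α β c : ℝ) : Prop :=
  ∀ n : ℕ, 1 ≤ n →
    2 * (n : ℝ) + 2 * c + α + β ≠ 0 ∧ 2 * (n : ℝ) + 2 * c + α + β + 2 ≠ 0 ∧
    2 * (n : ℝ) + 2 * c + α + β - 1 ≠ 0 ∧ 2 * (n : ℝ) + 2 * c + α + β + 1 ≠ 0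

theorem eq_and_eq_of_forall_mul_shift_eq {K : Type*} [Field K] [CharZero K] {s t D E : K}
    (hE : E ≠ 0)
    (h : ∀ n : ℕ, 1 ≤ n →
      D * ((2 * n + t) * (2 * n + t + 2)) = E * ((2 * n + s) * (2 * n + s + 2))) :
    s = t ∧ D = E := by
  have h₁ := h 1 le_rfl
  have h₂ := h 2 one_le_two
  have h₃ := h 3 (by norm_num)
  push_cast at h₁ h₂ h₃
  have hDE : D = E := by linear_combination (h₁ - 2 * h₂ + h₃) / 8
  subst hDE
  have hst : D * s = D * t := by linear_combination (h₁ - h₂) / 4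
  exact ⟨mul_left_cancel₀ hE hst, rfl⟩

theorem invariants_eq_iff_eq_or {K : Type*} [Field K] [CharZero K] {α β c α₀ β₀ c₀ : K} :
    2 * c + α + β = 2 * c₀ + α₀ + β₀ ∧ α ^ 2 = α₀ ^ 2 ∧ β ^ 2 = β₀ ^ 2 ↔
      (α, β, c) = (-α₀, -β₀, c₀ + α₀ + β₀) ∨ (α, β, c) = (α₀, -β₀, c₀ + β₀) ∨
      (α, β, c) = (-α₀, β₀, c₀ + α₀) ∨ (α, β, c) = (α₀, β₀, c₀) := by
  simp only [Prod.mk.injEq]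
  constructor
  · rintro ⟨hs, hα, hβ⟩
    rcases sq_eq_sq_iff_eq_or_eq_neg.mp hα with rfl | rfl <;>
      rcases sq_eq_sq_iff_eq_or_eq_neg.mp hβ with rfl | rfl
    · exact .inr <| .inr <| .inr ⟨rfl, rfl, by linear_combination hs / 2⟩
    · exact .inr <| .inl ⟨rfl, rfl, by linear_combination hs / 2⟩
    · exact .inr <| .inr <| .inl ⟨rfl, rfl, by linear_combination hs / 2⟩
    · exact .inl ⟨rfl, rfl, by linear_combination hs / 2⟩
  · rintro (⟨rfl, rfl, rfl⟩ | ⟨rfl, rfl, rfl⟩ | ⟨rfl, rfl, rfl⟩ | ⟨rfl, rfl, rfl⟩) <;>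
      refine ⟨?_, ?_, ?_⟩ <;> ring

section

variable {α β c α₀ β₀ c₀ : ℝ}

theorem jacA_eq_div_sub_half {n : ℕ} (hu : 2 * (n : ℝ) + 2 * c + α + β ≠ 0)
    (hu₂ : 2 * (n : ℝ) + 2 * c + α + β + 2 ≠ 0) :
    jacA α β c n = (α ^ 2 - β ^ 2)
      / (2 * ((2 * (n : ℝ) + 2 * c + α + β) * (2 * (n : ℝ) + 2 * c + α + β + 2))) - 1/2 := by
  rw [jacA, mul_assoc 2, sub_div, div_mul_cancel_right₀ (mul_ne_zero hu hu₂), one_div]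

theorem jacB_eq_div (α β c : ℝ) (n : ℕ) :
    jacB α β c n =
      ((2 * (n : ℝ) + 2 * c + α + β) ^ 4 - 2 * (α ^ 2 + β ^ 2) * (2 * (n : ℝ) + 2 * c + α + β) ^ 2
          + (α ^ 2 - β ^ 2) ^ 2)
        / 16 / ((2 * (n : ℝ) + 2 * c + α + β - 1) * (2 * (n : ℝ) + 2 * c + α + β) ^ 2
          * (2 * (n : ℝ) + 2 * c + α + β + 1)) := by
  unfold jacB
  congr 1
  ring

theorem jacA_congr (hs : 2 * c + α + β = 2 * c₀ + α₀ + β₀)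
    (hD : α ^ 2 - β ^ 2 = α₀ ^ 2 - β₀ ^ 2) (n : ℕ) :
    jacA α β c n = jacA α₀ β₀ c₀ n := by
  have hu : 2 * (n : ℝ) + 2 * c + α + β = 2 * (n : ℝ) + 2 * c₀ + α₀ + β₀ := by linear_combination hs
  rw [jacA, jacA, hu, hD]

theorem jacB_eq_iff {n : ℕ} (hs : 2 * c + α + β = 2 * c₀ + α₀ + β₀)
    (hD : α ^ 2 - β ^ 2 = α₀ ^ 2 - β₀ ^ 2) (hu : 2 * (n : ℝ) + 2 * c + α + β ≠ 0)
    (hu_sub : 2 * (n : ℝ) + 2 * c + α + β - 1 ≠ 0) (hu_add : 2 * (n : ℝ) + 2 * c + α + β + 1 ≠ 0) :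
    jacB α β c n = jacB α₀ β₀ c₀ n ↔ α ^ 2 + β ^ 2 = α₀ ^ 2 + β₀ ^ 2 := by
  have hu₀ : 2 * (n : ℝ) + 2 * c₀ + α₀ + β₀ = 2 * (n : ℝ) + 2 * c + α + β := by
    linear_combination -hs
  rw [jacB_eq_div, jacB_eq_div, hu₀, hD,
    div_left_inj' (mul_ne_zero (mul_ne_zero hu_sub (pow_ne_zero 2 hu)) hu_add),
    div_left_inj' (by norm_num), add_left_inj, sub_right_inj, mul_left_inj' (pow_ne_zero 2 hu),
    mul_right_inj' two_ne_zero]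

theorem shift_eq_and_sq_sub_sq_eq_of_jacA_eq (hden : JacDenNeZero α β c)
    (hden₀ : JacDenNeZero α₀ β₀ c₀) (hne : α₀ ^ 2 ≠ β₀ ^ 2)
    (h : ∀ n : ℕ, 1 ≤ n → jacA α β c n = jacA α₀ β₀ c₀ n) :
    2 * c + α + β = 2 * c₀ + α₀ + β₀ ∧ α ^ 2 - β ^ 2 = α₀ ^ 2 - β₀ ^ 2 := by
  refine eq_and_eq_of_forall_mul_shift_eq (sub_ne_zero.mpr hne) fun n hn => ?_
  obtain ⟨hu, hu₂, -⟩ := hden n hn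
  obtain ⟨hv, hv₂, -⟩ := hden₀ n hn
  have hA := h n hn
  rw [jacA_eq_div_sub_half hu hu₂, jacA_eq_div_sub_half hv hv₂, sub_left_inj,
    div_eq_div_iff (mul_ne_zero two_ne_zero (mul_ne_zero hu hu₂))
      (mul_ne_zero two_ne_zero (mul_ne_zero hv hv₂))] at hA
  linear_combination hA / 2

theorem jac_coefficients_eq_iff_invariants_eq (hden : JacDenNeZero α β c)
    (hden₀ : JacDenNeZero α₀ β₀ c₀) (hne : α₀ ^ 2 ≠ β₀ ^ 2) :
    (∀ n : ℕ, 1 ≤ n → jacA α β c n = jacA α₀ β₀ c₀ n ∧ jacB α β c n = jacB α₀ β₀ c₀ n) ↔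
      2 * c + α + β = 2 * c₀ + α₀ + β₀ ∧ α ^ 2 = α₀ ^ 2 ∧ β ^ 2 = β₀ ^ 2 := by
  constructor
  · intro h
    obtain ⟨hs, hD⟩ := shift_eq_and_sq_sub_sq_eq_of_jacA_eq hden hden₀ hne fun n hn => (h n hn).1
    obtain ⟨hu, -, hu_sub, hu_add⟩ := hden 1 le_rfl
    have hS := (jacB_eq_iff hs hD hu hu_sub hu_add).mp (h 1 le_rfl).2
    exact ⟨hs, by linarith, by linarith⟩
  · rintro ⟨hs, hα, hβ⟩ n hn
    obtain ⟨hu, -, hu_sub, hu_add⟩ := hden n hn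
    have hD : α ^ 2 - β ^ 2 = α₀ ^ 2 - β₀ ^ 2 := by rw [hα, hβ]
    exact ⟨jacA_congr hs hD n, (jacB_eq_iff hs hD hu hu_sub hu_add).mpr (by rw [hα, hβ])⟩

theorem coefficients_agree_iff_general (hden : JacDenNeZero α β c)
    (hden₀ : JacDenNeZero α₀ β₀ c₀) (hne : α₀ ^ 2 ≠ β₀ ^ 2) :
    (∀ n : ℕ, 1 ≤ n → jacA α β c n = jacA α₀ β₀ c₀ n ∧ jacB α β c n = jacB α₀ β₀ c₀ n) ↔
      (α, β, c) = (-α₀, -β₀, c₀ + α₀ + β₀) ∨ (α, β, c) = (α₀, -β₀, c₀ + β₀) ∨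
      (α, β, c) = (-α₀, β₀, c₀ + α₀) ∨ (α, β, c) = (α₀, β₀, c₀) :=
  (jac_coefficients_eq_iff_invariants_eq hden hden₀ hne).trans invariants_eq_iff_eq_or

end

theorem atkA_eq_jacA (n : ℕ) : atkA n = jacA (1/2) (2/3) (-1/12) n := by
  unfold atkA jacA
  rw [← neg_div, div_eq_div_iff (by positivity) (by ring_nf; positivity)]
  ring

theorem atkB_eq_jacB (n : ℕ) : atkB n = jacB (1/2) (2/3) (-1/12) n := by
  unfold atkB jacB
  congr 1 <;> ring

theorem jacDenNeZero_atkin : JacDenNeZero (1/2) (2/3) (-1/12) := by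
  intro n hn
  have hn' : (1 : ℝ) ≤ n := by exact_mod_cast hn
  refine ⟨?_, ?_, ?_, ?_⟩ <;> apply ne_of_gt <;> linarith

theorem coefficients_agree_iff (α β c : ℝ)
    (hden : ∀ n : ℕ, 1 ≤ n →
      2*(n:ℝ) + 2*c + α + β ≠ 0 ∧ 2*(n:ℝ) + 2*c + α + β + 2 ≠ 0 ∧
      2*(n:ℝ) + 2*c + α + β - 1 ≠ 0 ∧ 2*(n:ℝ) + 2*c + α + β + 1 ≠ 0) :
    (∀ n : ℕ, 1 ≤ n → jacA α β c n = atkA n ∧ jacB α β c n = atkB n) ↔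
      ((α, β, c) = (-(1:ℝ)/2, -(2:ℝ)/3, (13:ℝ)/12) ∨
       (α, β, c) = ((1:ℝ)/2, -(2:ℝ)/3, (7:ℝ)/12) ∨
       (α, β, c) = (-(1:ℝ)/2, (2:ℝ)/3, (5:ℝ)/12) ∨
       (α, β, c) = ((1:ℝ)/2, (2:ℝ)/3, -(1:ℝ)/12)) := by
  simp only [atkA_eq_jacA, atkB_eq_jacB]
  rw [coefficients_agree_iff_general hden jacDenNeZero_atkin (by norm_num)]
  norm_num
end
end

section
/- For every integer n ≥ 0 and every real x, the rescaled Atkin polynomials satisfy 𝓐_{n+1}(x) = (x − 8)·V_n^{(−1/2,2/3)}(x;5/12) + (91/12)·𝒱_n^{(−1/2,2/3)}(x;5/12). -/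
noncomputable section

/-- The rescaled Atkin polynomials `𝓐_n`. -/
def Atkin : ℕ → ℝ → ℝ
  | 0, _ => 1
  | 1, x => x - 5/12
  | 2, x => x^2 - (205/216) * x + 935/10368
  | n + 3, x =>
      (x - 2 * (((n : ℝ) + 2)^2 - 29/144) / (4 * ((n : ℝ) + 2)^2 - 1)) * Atkin (n + 2) x
      - ((((n : ℝ) + 2) - 13/12) * (((n : ℝ) + 2) - 7/12) * (((n : ℝ) + 2) - 5/12)
          * (((n : ℝ) + 2) + 1/12)
         / (2 * ((n : ℝ) + 2) * (2 * ((n : ℝ) + 2) - 1)^2 * (2 * ((n : ℝ) + 2) - 2)))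
        * Atkin (n + 1) x

/-- `λ₀` for the associated Jacobi recurrence. -/
def lam0 (α β c : ℝ) : ℝ := (c + β + 1) * (c + α + β + 1) / ((2*c + α + β + 1) * (2*c + α + β + 2))

/-- `μ₀` for the associated Jacobi recurrence. -/
def mu0 (α β c : ℝ) : ℝ := c * (c + α) / ((2*c + α + β) * (2*c + α + β + 1))

/-- Solutions of the associated Jacobi second order recurrence with `T 0 = 1` and
prescribed `T 1`. -/
def AJ (α β c : ℝ) (T1 : ℝ → ℝ) : ℕ → ℝ → ℝ
  | 0, _ => 1
  | 1, x => T1 x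
  | n + 2, x =>
      (x + (α^2 - β^2 - (2*((n:ℝ)+1) + 2*c + α + β) * (2*((n:ℝ)+1) + 2*c + α + β + 2))
            / (2 * (2*((n:ℝ)+1) + 2*c + α + β) * (2*((n:ℝ)+1) + 2*c + α + β + 2)))
        * AJ α β c T1 (n + 1) x
      - ((((n:ℝ)+1) + c) * (((n:ℝ)+1) + c + α) * (((n:ℝ)+1) + c + β) * (((n:ℝ)+1) + c + α + β)
          / ((2*((n:ℝ)+1) + 2*c + α + β - 1) * (2*((n:ℝ)+1) + 2*c + α + β)^2
              * (2*((n:ℝ)+1) + 2*c + α + β + 1)))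
        * AJ α β c T1 n x

/-- The monic associated Jacobi polynomials `V_n^{(α,β)}(x;c)`. -/
def V (α β c : ℝ) : ℕ → ℝ → ℝ :=
  AJ α β c (fun x => x - (lam0 α β c + mu0 α β c))

/-- The monic associated Jacobi polynomials `𝒱_n^{(α,β)}(x;c)`. -/
def calV (α β c : ℝ) : ℕ → ℝ → ℝ :=
  AJ α β c (fun x => x - lam0 α β c)

/-!
Write `m = n + 1`. When `2c + α + β = 1`, the denominators of the `n`-th step of the associated
Jacobi recurrence become those of the Atkin recurrence at `m`, and the numerators agree as well for
`(α, β, c) = (-1/2, 2/3, 5/12)`. For fixed `x`, the shifted Atkin sequence therefore lies in the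
solution space of the associated Jacobi recurrence, where a sequence is determined by its first two
terms; the coefficients `x - 8` and `91/12` are read off from these.
-/

section ThreeTermRecurrence

variable {R : Type*} [CommRing R]

/-- The solution space of the three-term recurrence `u (n + 2) = a n * u (n + 1) - b n * u n`, the
analogue of `LinearRecurrence.solSpace` for coefficients that vary with `n`. -/
def threeTermSolutions (a b : ℕ → R) : Submodule R (ℕ → R) where
  carrier := {u | ∀ n, u (n + 2) = a n * u (n + 1) - b n * u n}
  zero_mem' n := by simp
  add_mem' {u v} hu hv n := by
    simp only [Pi.add_apply, hu n, hv n]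
    ring
  smul_mem' r u hu n := by
    simp only [Pi.smul_apply, smul_eq_mul, hu n]
    ring

theorem mem_threeTermSolutions {a b u : ℕ → R} :
    u ∈ threeTermSolutions a b ↔ ∀ n, u (n + 2) = a n * u (n + 1) - b n * u n :=
  Iff.rfl

theorem eq_of_mem_threeTermSolutions {a b u v : ℕ → R} (hu : u ∈ threeTermSolutions a b)
    (hv : v ∈ threeTermSolutions a b) (h_zero : u 0 = v 0) (h_one : u 1 = v 1) : u = v := by
  funext n
  induction n using Nat.twoStepInduction with
  | zero => exact h_zero
  | one => exact h_one
  | more n ih ih_succ =>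
    rw [mem_threeTermSolutions.1 hu, mem_threeTermSolutions.1 hv, ih, ih_succ]

end ThreeTermRecurrence

section AssociatedJacobi

variable (α β c : ℝ)

/-- The coefficient added to `x` in the associated Jacobi recurrence at the index `t`, which is real
to avoid casts. -/
def assocJacobiDiag (t : ℝ) : ℝ :=
  (α ^ 2 - β ^ 2 - (2 * t + 2 * c + α + β) * (2 * t + 2 * c + α + β + 2))
    / (2 * (2 * t + 2 * c + α + β) * (2 * t + 2 * c + α + β + 2))

/-- The coefficient of `-T_{t-1}` in the associated Jacobi recurrence at the index `t`, which is
real to avoid casts. -/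
def assocJacobiOffDiag (t : ℝ) : ℝ :=
  (t + c) * (t + c + α) * (t + c + β) * (t + c + α + β)
    / ((2 * t + 2 * c + α + β - 1) * (2 * t + 2 * c + α + β) ^ 2 * (2 * t + 2 * c + α + β + 1))

/-- The sequences satisfying the associated Jacobi recurrence at a fixed point `x`. The recurrence
starts at the index `1`, whence the shift in the coefficients. -/
def assocJacobiSolutions (x : ℝ) : Submodule ℝ (ℕ → ℝ) :=
  threeTermSolutions (fun n ↦ x + assocJacobiDiag α β c (n + 1))
    (fun n ↦ assocJacobiOffDiag α β c (n + 1))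

theorem AJ_mem_assocJacobiSolutions (T₁ : ℝ → ℝ) (x : ℝ) :
    (AJ α β c T₁ · x) ∈ assocJacobiSolutions α β c x :=
  fun _ ↦ rfl

theorem V_mem_assocJacobiSolutions (x : ℝ) : (V α β c · x) ∈ assocJacobiSolutions α β c x :=
  AJ_mem_assocJacobiSolutions α β c _ x

theorem calV_mem_assocJacobiSolutions (x : ℝ) :
    (calV α β c · x) ∈ assocJacobiSolutions α β c x :=
  AJ_mem_assocJacobiSolutions α β c _ x

theorem V_zero (x : ℝ) : V α β c 0 x = 1 := rfl

theorem V_one (x : ℝ) : V α β c 1 x = x - (lam0 α β c + mu0 α β c) := rfl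

theorem calV_zero (x : ℝ) : calV α β c 0 x = 1 := rfl

theorem calV_one (x : ℝ) : calV α β c 1 x = x - lam0 α β c := rfl

variable {α β c}

theorem assocJacobiDiag_of_two_mul_add_add_eq_one (h : 2 * c + α + β = 1) (t : ℝ) :
    assocJacobiDiag α β c t =
      -(2 * ((t + 1) ^ 2 - (1 + α ^ 2 - β ^ 2) / 4) / (4 * (t + 1) ^ 2 - 1)) := by
  have h_sum : 2 * t + 2 * c + α + β = 2 * (t + 1) - 1 := by linear_combination h
  have h_num : α ^ 2 - β ^ 2 - (2 * (t + 1) - 1) * (2 * (t + 1) - 1 + 2) =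
      2 * -(2 * ((t + 1) ^ 2 - (1 + α ^ 2 - β ^ 2) / 4)) := by ring
  have h_den : 2 * (2 * (t + 1) - 1) * (2 * (t + 1) - 1 + 2) = 2 * (4 * (t + 1) ^ 2 - 1) := by
    ring
  rw [assocJacobiDiag, h_sum, h_num, h_den, mul_div_mul_left _ _ two_ne_zero, neg_div]

theorem assocJacobiOffDiag_of_two_mul_add_add_eq_one (h : 2 * c + α + β = 1) (t : ℝ) :
    assocJacobiOffDiag α β c t =
      (t + 1 + (c + α - 1)) * (t + 1 + (c - 1)) * (t + 1 - c) * (t + 1 + (c + β - 1))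
        / (2 * (t + 1) * (2 * (t + 1) - 1) ^ 2 * (2 * (t + 1) - 2)) := by
  have h_sum : 2 * t + 2 * c + α + β = 2 * (t + 1) - 1 := by linear_combination h
  have h_last : t + c + α + β = t + 1 - c := by linear_combination h
  rw [assocJacobiOffDiag, h_sum, h_last]
  congr 1 <;> ring

end AssociatedJacobi

theorem Atkin_succ_mem_assocJacobiSolutions (x : ℝ) :
    (fun n ↦ Atkin (n + 1) x) ∈ assocJacobiSolutions (-1 / 2) (2 / 3) (5 / 12) x := by
  refine mem_threeTermSolutions.2 fun n ↦ ?_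
  have h_sum : 2 * (5 / 12) + -1 / 2 + 2 / 3 = (1 : ℝ) := by norm_num
  rw [assocJacobiDiag_of_two_mul_add_add_eq_one h_sum,
    assocJacobiOffDiag_of_two_mul_add_add_eq_one h_sum, Atkin]
  ring

theorem atkin_eq_V_add_calV (n : ℕ) (x : ℝ) :
    Atkin (n + 1) x =
      (x - 8) * V (-(1:ℝ)/2) ((2:ℝ)/3) ((5:ℝ)/12) n x
        + (91/12) * calV (-(1:ℝ)/2) ((2:ℝ)/3) ((5:ℝ)/12) n x := by
  have h_comb := add_mem
    (Submodule.smul_mem _ (x - 8) (V_mem_assocJacobiSolutions (-1 / 2) (2 / 3) (5 / 12) x))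
    (Submodule.smul_mem _ (91 / 12) (calV_mem_assocJacobiSolutions (-1 / 2) (2 / 3) (5 / 12) x))
  have h_lam0 : lam0 (-1 / 2) (2 / 3) (5 / 12) = 475 / 864 := by norm_num [lam0]
  have h_mu0 : mu0 (-1 / 2) (2 / 3) (5 / 12) = -5 / 288 := by norm_num [mu0]
  refine congrFun (eq_of_mem_threeTermSolutions
    (Atkin_succ_mem_assocJacobiSolutions x) h_comb ?init_zero ?init_one) n
  case init_zero =>
    simp only [Pi.add_apply, Pi.smul_apply, smul_eq_mul, V_zero, calV_zero, Atkin]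
    ring
  case init_one =>
    simp only [Pi.add_apply, Pi.smul_apply, smul_eq_mul, V_one, calV_one, h_lam0, h_mu0, Atkin]
    ring
end
end

section
/- For all integers n ≥ 0 and 0 ≤ k ≤ n, and for every real y, the following identity of terminating hypergeometric sums holds: ₄F₃(k−n, n+k+2, −1/12, 7/12; k+11/12, k+19/12, 1; y) − (5y/12)·((k−n)(n+k+2))/((k+19/12)(k+11/12))·₄F₃(k+1−n, n+k+3, 11/12, 7/12; k+1+11/12, k+1+19/12, 2; y) = (6/5)·₄F₃(k−n, n+k+2, 11/12, −5/12; k+11/12, k+19/12, 1; y) − (1/5)·₄F₃(k−n, n+k+2, −1/12, −5/12; k+11/12, k+19/12, 1; y). -/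
/-!
Since `(c + 1)_j - (c)_j = j (c + 1)_{j-1}`, raising `a₃` by one changes the `₄F₃` by `a₄ D`, where
`D` is `y a₁ a₂ / (b₁ b₂ b₃)` times the series whose parameters are all raised by one. This holds
term by term after an index shift, so it needs no termination: truncating the `₄F₃` after `y ^ m`
truncates the raised series after `y ^ (m - 1)`. By symmetry, raising `a₄` changes the `₄F₃` by
`a₃ D`. The second difference minus `s` times the first is therefore `(a₃ - s a₄) D`, and
`a₃ = -1/12`, `a₄ = -5/12`, `s = 6/5` give the coefficient `5/12`.
-/

noncomputable section

/-- Rising factorial (Pochhammer symbol) `(a)_n = a(a+1)⋯(a+n-1)`. -/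
def poch (a : ℝ) (n : ℕ) : ℝ := ∏ i ∈ Finset.range n, (a + (i : ℝ))

/-- Terminating `₄F₃(a₁,a₂,a₃,a₄;b₁,b₂,b₃;y)`, summed up to the termination index `m`. -/
def F43 (a₁ a₂ a₃ a₄ b₁ b₂ b₃ : ℝ) (m : ℕ) (y : ℝ) : ℝ :=
  ∑ j ∈ Finset.range (m + 1),
    poch a₁ j * poch a₂ j * poch a₃ j * poch a₄ j
      / (poch b₁ j * poch b₂ j * poch b₃ j * (Nat.factorial j : ℝ)) * y ^ j

/-- The `j`-th summand of `₄F₃(a₁,a₂,a₃,a₄;b₁,b₂,b₃;y)`. Unlike `F43`, sums of it over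
`Finset.range m` include the empty series, which is what the shifted series is for `m = 0`. -/
def F43Term (a₁ a₂ a₃ a₄ b₁ b₂ b₃ : ℝ) (j : ℕ) (y : ℝ) : ℝ :=
  poch a₁ j * poch a₂ j * poch a₃ j * poch a₄ j
    / (poch b₁ j * poch b₂ j * poch b₃ j * (Nat.factorial j : ℝ)) * y ^ j

theorem poch_zero (a : ℝ) : poch a 0 = 1 :=
  Finset.prod_range_zero _

theorem poch_succ_right (a : ℝ) (j : ℕ) : poch a (j + 1) = poch a j * (a + j) :=
  Finset.prod_range_succ _ j

theorem poch_succ_left (a : ℝ) (j : ℕ) : poch a (j + 1) = a * poch (a + 1) j := by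
  simp only [poch, Finset.prod_range_succ', Nat.cast_add, Nat.cast_one, Nat.cast_zero, add_zero,
    add_assoc, add_comm (1 : ℝ), mul_comm a]

theorem poch_add_one_sub_poch_div_factorial (a : ℝ) (j : ℕ) :
    (poch (a + 1) (j + 1) - poch a (j + 1)) / (j + 1).factorial =
      poch (a + 1) j / j.factorial := by
  have h_diff : poch (a + 1) (j + 1) - poch a (j + 1) = (j + 1) * poch (a + 1) j := by
    rw [poch_succ_right, poch_succ_left]
    ring
  rw [h_diff, Nat.factorial_succ, Nat.cast_mul, Nat.cast_succ,
    mul_div_mul_left _ _ (by positivity)]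

section Contiguity

variable (a₁ a₂ a₃ a₄ b₁ b₂ b₃ : ℝ)

theorem F43Term_zero (y : ℝ) : F43Term a₁ a₂ a₃ a₄ b₁ b₂ b₃ 0 y = 1 := by
  simp only [F43Term, poch_zero, Nat.factorial_zero, Nat.cast_one, mul_one, div_one, pow_zero]

theorem F43Term_a₃_add_one_sub_F43Term (j : ℕ) (y : ℝ) :
    F43Term a₁ a₂ (a₃ + 1) a₄ b₁ b₂ b₃ (j + 1) y - F43Term a₁ a₂ a₃ a₄ b₁ b₂ b₃ (j + 1) y =
      y * (a₁ * a₂ * a₄) / (b₁ * b₂ * b₃) *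
        F43Term (a₁ + 1) (a₂ + 1) (a₃ + 1) (a₄ + 1) (b₁ + 1) (b₂ + 1) (b₃ + 1) j y := by
  calc
    _ = poch a₁ (j + 1) * poch a₂ (j + 1) * poch a₄ (j + 1) /
          (poch b₁ (j + 1) * poch b₂ (j + 1) * poch b₃ (j + 1)) * y ^ (j + 1) *
          ((poch (a₃ + 1) (j + 1) - poch a₃ (j + 1)) / (j + 1).factorial) := by
      simp only [F43Term]
      ring
    _ = poch a₁ (j + 1) * poch a₂ (j + 1) * poch a₄ (j + 1) /
          (poch b₁ (j + 1) * poch b₂ (j + 1) * poch b₃ (j + 1)) * y ^ (j + 1) *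
          (poch (a₃ + 1) j / j.factorial) := by
      rw [poch_add_one_sub_poch_div_factorial]
    _ = _ := by
      simp only [F43Term, poch_succ_left a₁, poch_succ_left a₂, poch_succ_left a₄,
        poch_succ_left b₁, poch_succ_left b₂, poch_succ_left b₃]
      ring

theorem F43_a₃_add_one_sub_F43 (m : ℕ) (y : ℝ) :
    F43 a₁ a₂ (a₃ + 1) a₄ b₁ b₂ b₃ m y - F43 a₁ a₂ a₃ a₄ b₁ b₂ b₃ m y =
      y * (a₁ * a₂ * a₄) / (b₁ * b₂ * b₃) * ∑ j ∈ Finset.range m,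
        F43Term (a₁ + 1) (a₂ + 1) (a₃ + 1) (a₄ + 1) (b₁ + 1) (b₂ + 1) (b₃ + 1) j y := by
  change ∑ j ∈ Finset.range (m + 1), F43Term a₁ a₂ (a₃ + 1) a₄ b₁ b₂ b₃ j y -
    ∑ j ∈ Finset.range (m + 1), F43Term a₁ a₂ a₃ a₄ b₁ b₂ b₃ j y = _
  rw [← Finset.sum_sub_distrib, Finset.sum_range_succ', F43Term_zero, F43Term_zero, sub_self,
    add_zero, Finset.mul_sum]
  exact Finset.sum_congr rfl fun j _ ↦ F43Term_a₃_add_one_sub_F43Term a₁ a₂ a₃ a₄ b₁ b₂ b₃ j y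

theorem F43Term_swap_a₃_a₄ (j : ℕ) (y : ℝ) :
    F43Term a₁ a₂ a₃ a₄ b₁ b₂ b₃ j y = F43Term a₁ a₂ a₄ a₃ b₁ b₂ b₃ j y := by
  simp only [F43Term, mul_right_comm _ (poch a₃ j)]

theorem F43_swap_a₃_a₄ (m : ℕ) (y : ℝ) :
    F43 a₁ a₂ a₃ a₄ b₁ b₂ b₃ m y = F43 a₁ a₂ a₄ a₃ b₁ b₂ b₃ m y :=
  Finset.sum_congr rfl fun j _ ↦ F43Term_swap_a₃_a₄ a₁ a₂ a₃ a₄ b₁ b₂ b₃ j y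

theorem F43_a₄_add_one_sub_F43 (m : ℕ) (y : ℝ) :
    F43 a₁ a₂ a₃ (a₄ + 1) b₁ b₂ b₃ m y - F43 a₁ a₂ a₃ a₄ b₁ b₂ b₃ m y =
      y * (a₁ * a₂ * a₃) / (b₁ * b₂ * b₃) * ∑ j ∈ Finset.range m,
        F43Term (a₁ + 1) (a₂ + 1) (a₃ + 1) (a₄ + 1) (b₁ + 1) (b₂ + 1) (b₃ + 1) j y := by
  simp only [F43_swap_a₃_a₄ a₁ a₂ a₃, F43Term_swap_a₃_a₄ _ _ (a₃ + 1), F43_a₃_add_one_sub_F43]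

end Contiguity

theorem hypergeometric_contiguous_identity_general (a₁ a₂ a₃ a₄ b₁ b₂ b₃ s y : ℝ) (m : ℕ)
    (_hb₁ : ∀ i < m, b₁ + i ≠ 0) (_hb₂ : ∀ i < m, b₂ + i ≠ 0) (_hb₃ : ∀ i < m, b₃ + i ≠ 0) :
    F43 a₁ a₂ a₃ (a₄ + 1) b₁ b₂ b₃ m y
      - (a₃ - s * a₄) * y * (a₁ * a₂) / (b₁ * b₂ * b₃) * ∑ j ∈ Finset.range m,
        F43Term (a₁ + 1) (a₂ + 1) (a₃ + 1) (a₄ + 1) (b₁ + 1) (b₂ + 1) (b₃ + 1) j y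
    = s * F43 a₁ a₂ (a₃ + 1) a₄ b₁ b₂ b₃ m y - (s - 1) * F43 a₁ a₂ a₃ a₄ b₁ b₂ b₃ m y := by
  linear_combination F43_a₄_add_one_sub_F43 a₁ a₂ a₃ a₄ b₁ b₂ b₃ m y
    - s * F43_a₃_add_one_sub_F43 a₁ a₂ a₃ a₄ b₁ b₂ b₃ m y

theorem hypergeometric_contiguous_identity (n k : ℕ) (hk : k ≤ n) (y : ℝ) :
    F43 ((k:ℝ) - (n:ℝ)) ((n:ℝ) + (k:ℝ) + 2) (-1/12) (7/12)
        ((k:ℝ) + 11/12) ((k:ℝ) + 19/12) 1 (n - k) y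
      - (5 * y / 12) * (((k:ℝ) - (n:ℝ)) * ((n:ℝ) + (k:ℝ) + 2))
          / (((k:ℝ) + 19/12) * ((k:ℝ) + 11/12)) *
        (∑ j ∈ Finset.range (n - k),
          poch ((k:ℝ) + 1 - (n:ℝ)) j * poch ((n:ℝ) + (k:ℝ) + 3) j * poch (11/12) j * poch (7/12) j
            / (poch ((k:ℝ) + 1 + 11/12) j * poch ((k:ℝ) + 1 + 19/12) j * poch 2 j
                * (Nat.factorial j : ℝ)) * y ^ j)
    = (6/5) * F43 ((k:ℝ) - (n:ℝ)) ((n:ℝ) + (k:ℝ) + 2) (11/12) (-5/12)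
          ((k:ℝ) + 11/12) ((k:ℝ) + 19/12) 1 (n - k) y
      - (1/5) * F43 ((k:ℝ) - (n:ℝ)) ((n:ℝ) + (k:ℝ) + 2) (-1/12) (-5/12)
          ((k:ℝ) + 11/12) ((k:ℝ) + 19/12) 1 (n - k) y := by
  have h := hypergeometric_contiguous_identity_general ((k : ℝ) - n) (n + k + 2) (-1 / 12) (-5 / 12)
    (k + 11 / 12) (k + 19 / 12) 1 (6 / 5) y (n - k) (fun _ _ ↦ by positivity)
    (fun _ _ ↦ by positivity) (fun _ _ ↦ by positivity)
  simp only [F43Term] at h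
  convert h using 4 <;> ring_nf
end
end

section
/- For every integer n ≥ 0 and every real x with 0 ≤ x < 1, the rescaled Atkin polynomials satisfy 𝓐_{n+1}(x) = C(x)·Ũ_n^{(1/2,−2/3)}(x;7/12) + D(x)·Ỹ_n^{(1/2,−2/3)}(x;7/12). -/
noncomputable section

/-- The Gauss hypergeometric series `F(a,b;c;x) = Σ_{k≥0} (a)_k (b)_k / ((c)_k k!) xᵏ`. -/
def hyp (a b c x : ℝ) : ℝ :=
  ∑' k : ℕ, poch a k * poch b k / (poch c k * (Nat.factorial k : ℝ)) * x ^ k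

/-- `U_n^{(α,β)}(x;c)`. -/
def Ufun (α β c : ℝ) (n : ℕ) (x : ℝ) : ℝ :=
  (-1 : ℝ)^n * (poch (β + c + 1) n / poch (c + 1) n)
    * hyp (-(n:ℝ) - c) ((n:ℝ) + α + β + c + 1) (1 + β) x

/-- `Ũ_n^{(α,β)}(x;c)`. -/
def Ut (α β c : ℝ) (n : ℕ) (x : ℝ) : ℝ :=
  (poch (c + 1) n * poch (α + β + c + 1) n / poch (α + β + 2*c + 1) (2*n)) * Ufun α β c n x

/-- `Y_n^{(α,β)}(x;c)`. -/
def Yfun (α β c : ℝ) (n : ℕ) (x : ℝ) : ℝ :=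
  (-1 : ℝ)^n * (poch (α + c + 1) n / poch (α + β + c + 1) n)
    * hyp (-(n:ℝ) - β - c) ((n:ℝ) + α + c + 1) (1 - β) x

/-- `Ỹ_n^{(α,β)}(x;c)`. -/
def Yt (α β c : ℝ) (n : ℕ) (x : ℝ) : ℝ :=
  (poch (c + 1) n * poch (α + β + c + 1) n / poch (α + β + 2*c + 1) (2*n)) * Yfun α β c n x

/-- The function `C(x)` of Theorem 5.2. -/
def Cfun (x : ℝ) : ℝ :=
  -(1/60) * (24 * hyp (-5/12) (-5/12) (-1/3) x + hyp (-5/12) (-5/12) (2/3) x)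

/-- The function `D(x)` of Theorem 5.2. -/
def Dfun (x : ℝ) : ℝ :=
  (91/384) * x * (4 * hyp (-1/12) (-1/12) (1/3) x - 5 * hyp (11/12) (-1/12) (4/3) x)

/-!
We work with formal power series. Gauss's hypergeometric equation and the contiguity relations show
that `Ũ_n` and `Ỹ_n` satisfy the recurrence of the associated Jacobi polynomials, which at
`(α, β; c) = (1/2, -2/3; 7/12)` is the Atkin recurrence. So it suffices to compare initial values,
that is, to check that `C` and `D` solve the linear system `C Ũ_i + D Ỹ_i = 𝓐_{i+1}`, `i = 0, 1`.
Its determinant is the Wronskian of two solutions of the hypergeometric equation, hence the multiple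
`-1/3 (1 - x)^{-1/2}` of a binomial series, and Euler's transformation turns `C (1 - x)^{-1/2}` and
`D (1 - x)^{-1/2}` into the numerators of Cramer's rule. All the series involved converge absolutely
for `|x| < 1`, so that the formal identity may be evaluated.
-/

section GaussSeries

open PowerSeries Nat

theorem eval_ascPochhammer_succ_left {R : Type*} [CommSemiring R] (a : R) (k : ℕ) :
    (ascPochhammer R (k + 1)).eval a = a * (ascPochhammer R k).eval (a + 1) := by
  simp [ascPochhammer_succ_left]

theorem mul_eval_ascPochhammer_add_one {R : Type*} [CommSemiring R] (a : R) (k : ℕ) :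
    a * (ascPochhammer R k).eval (a + 1) = (ascPochhammer R k).eval a * (a + k) := by
  rw [← eval_ascPochhammer_succ_left, ascPochhammer_succ_eval]

theorem eval_ascPochhammer_ne_zero {R : Type*} [CommRing R] [IsDomain R] {a : R}
    (ha : ∀ k : ℕ, a + k ≠ 0) (k : ℕ) : (ascPochhammer R k).eval a ≠ 0 := by
  rw [Ne, ascPochhammer_eval_eq_zero_iff]
  rintro ⟨m, -, hm⟩
  exact ha m (by rw [hm, add_neg_cancel])

theorem coeff_X_mul_derivative {R : Type*} [CommSemiring R] (f : R⟦X⟧) (k : ℕ) :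
    coeff k (X * d⁄dX R f) = k * coeff k f := by
  cases k <;> simp [coeff_succ_X_mul, coeff_derivative, mul_comm]

theorem coeff_one_sub_X_mul_derivative {R : Type*} [CommRing R] (f : R⟦X⟧) (k : ℕ) :
    coeff k ((1 - X) * d⁄dX R f) = (k + 1) * coeff (k + 1) f - k * coeff k f := by
  rw [sub_mul, one_mul, map_sub, coeff_X_mul_derivative, coeff_derivative, mul_comm]

variable {K : Type*} [Field K]

/-- The Gauss hypergeometric series `F(a, b; c; X)` as a formal power series. Division by zero makes
the `k`-th coefficient vanish as soon as `(c)_k = 0`. -/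
def gaussSeries (a b c : K) : K⟦X⟧ := .mk (ordinaryHypergeometricCoefficient a b c)

theorem coeff_gaussSeries (a b c : K) (k : ℕ) :
    coeff k (gaussSeries a b c) = (ascPochhammer K k).eval a * (ascPochhammer K k).eval b
      / ((ascPochhammer K k).eval c * k !) := by
  rw [gaussSeries, coeff_mk, ordinaryHypergeometricCoefficient]
  field_simp

theorem constantCoeff_gaussSeries (a b c : K) : constantCoeff (gaussSeries a b c) = 1 := by
  simp [← coeff_zero_eq_constantCoeff_apply, coeff_gaussSeries]

theorem gaussSeries_comm (a b c : K) : gaussSeries a b c = gaussSeries b a c := by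
  ext k
  simp only [coeff_gaussSeries, mul_comm]

theorem X_mul_derivative_gaussSeries_add_smul (a b : K) {c : K} (hc : ∀ k : ℕ, c - 1 + k ≠ 0) :
    X * d⁄dX K (gaussSeries a b c) + (c - 1) • gaussSeries a b c
      = (c - 1) • gaussSeries a b (c - 1) := by
  ext k
  have hpoch := mul_eval_ascPochhammer_add_one (c - 1) k
  have hc₁ := eval_ascPochhammer_ne_zero hc k
  have hc₂ := eval_ascPochhammer_ne_zero (a := c) (fun k => by simpa using hc (k + 1)) k
  rw [sub_add_cancel] at hpoch
  simp only [map_add, coeff_X_mul_derivative, coeff_smul, coeff_gaussSeries, smul_eq_mul]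
  field_simp
  linear_combination - ((ascPochhammer K k).eval a * (ascPochhammer K k).eval b / k !) * hpoch

/-- The hypergeometric differential operator
`f ↦ X(1-X) f'' + (c - (a+b+1) X) f' - a b f`, which annihilates `F(a, b; c; X)`. -/
def hypergeometricOperator (a b c : K) (f : K⟦X⟧) : K⟦X⟧ :=
  X * (1 - X) * d⁄dX K (d⁄dX K f) + c • d⁄dX K f - (a + b + 1) • (X * d⁄dX K f) - (a * b) • f

theorem coeff_hypergeometricOperator (a b c : K) (f : K⟦X⟧) (k : ℕ) :
    coeff k (hypergeometricOperator a b c f)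
      = (k + 1) * (c + k) * coeff (k + 1) f - (a + k) * (b + k) * coeff k f := by
  rw [hypergeometricOperator, mul_sub, mul_one, sub_mul, mul_assoc]
  rcases k with _ | _ | k <;>
    simp only [map_add, map_sub, coeff_smul, coeff_derivative, coeff_zero_X_mul, coeff_succ_X_mul,
      smul_eq_mul] <;> push_cast <;> ring

/-- The formal binomial series `(1 - X) ^ s`, encoded as the Gauss series `F(-s, 1; 1; X)`. -/
def oneSubPow (s : K) : K⟦X⟧ := gaussSeries (-s) 1 1

theorem constantCoeff_oneSubPow (s : K) : constantCoeff (oneSubPow s) = 1 :=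
  constantCoeff_gaussSeries _ _ _

theorem oneSubPow_ne_zero (s : K) : oneSubPow s ≠ 0 := fun h => by
  simpa [h] using constantCoeff_oneSubPow s

variable [CharZero K]

theorem coeff_succ_gaussSeries (a b : K) {c : K} {k : ℕ} (hc : c + k ≠ 0) :
    (k + 1) * (c + k) * coeff (k + 1) (gaussSeries a b c)
      = (a + k) * (b + k) * coeff k (gaussSeries a b c) := by
  have hk : (k + 1 : K) ≠ 0 := k.cast_add_one_ne_zero
  simp only [coeff_gaussSeries, ascPochhammer_succ_eval, Nat.factorial_succ, Nat.cast_mul,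
    Nat.cast_succ]
  field_simp

theorem eq_smul_gaussSeries {a b c : K} (hc : ∀ k : ℕ, c + k ≠ 0) {f : K⟦X⟧}
    (hf : ∀ k : ℕ, (k + 1) * (c + k) * coeff (k + 1) f = (a + k) * (b + k) * coeff k f) :
    f = constantCoeff f • gaussSeries a b c := by
  ext k
  rw [coeff_smul, smul_eq_mul]
  induction k with
  | zero => simp [constantCoeff_gaussSeries]
  | succ k ih =>
    have hk : (k + 1 : K) ≠ 0 := k.cast_add_one_ne_zero
    refine mul_left_cancel₀ (mul_ne_zero hk (hc k)) ?_
    linear_combination hf k + (a + k) * (b + k) * ih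
      - constantCoeff f * coeff_succ_gaussSeries a b (hc k)

theorem gaussSeries_add_one_sub_gaussSeries_add_one (a b c : K) :
    gaussSeries (a + 1) b c - gaussSeries a (b + 1) c
      = ((b - a) / c) • (X * gaussSeries (a + 1) (b + 1) (c + 1)) := by
  ext k
  cases k with
  | zero => simp [constantCoeff_gaussSeries]
  | succ k =>
    have hk : (k + 1 : K) ≠ 0 := k.cast_add_one_ne_zero
    have ha := ascPochhammer_succ_eval k (a + 1)
    have hb := ascPochhammer_succ_eval k (b + 1)
    simp only [map_sub, coeff_smul, coeff_succ_X_mul, coeff_gaussSeries, ha, hb,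
      eval_ascPochhammer_succ_left _ k, Nat.factorial_succ, Nat.cast_mul, Nat.cast_succ,
      smul_eq_mul]
    field_simp
    ring

theorem smul_gaussSeries_eq_derivative_add_one (a b : K) {c : K} (hc : ∀ k : ℕ, c + k ≠ 0) :
    c • gaussSeries a b c
      = c • gaussSeries (a + 1) (b + 1) (c + 1)
        - (a + b + 1) • (X * gaussSeries (a + 1) (b + 1) (c + 1))
        + (1 - X) * (X * d⁄dX K (gaussSeries (a + 1) (b + 1) (c + 1))) := by
  rw [sub_mul, one_mul]
  ext k
  cases k with
  | zero => simp [constantCoeff_gaussSeries]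
  | succ k =>
    have hk : (k + 1 : K) ≠ 0 := k.cast_add_one_ne_zero
    have hc₀ : c ≠ 0 := by simpa using hc 0
    have hc₁ (m : ℕ) : c + 1 + m ≠ 0 := by simpa [add_assoc, add_comm (1 : K)] using hc (m + 1)
    have hck := hc₁ k
    have hpc := eval_ascPochhammer_ne_zero hc₁ k
    simp only [map_add, map_sub, coeff_smul, coeff_succ_X_mul, coeff_X_mul_derivative,
      coeff_derivative, coeff_gaussSeries, eval_ascPochhammer_succ_left a,
      eval_ascPochhammer_succ_left b, eval_ascPochhammer_succ_left c,
      ascPochhammer_succ_eval k (a + 1), ascPochhammer_succ_eval k (b + 1),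
      ascPochhammer_succ_eval k (c + 1),
      Nat.factorial_succ, Nat.cast_mul, Nat.cast_succ, smul_eq_mul]
    field_simp
    ring

theorem smul_gaussSeries_sub_one_add_one_sub (a b : K) {c : K} (hc : ∀ k : ℕ, c + k ≠ 0) :
    (b * (c - a)) • (gaussSeries (a - 1) (b + 1) c - gaussSeries a b c)
      = (b - a + 1) • ((1 - X) * (X * d⁄dX K (gaussSeries a b c))
        - b • (X * gaussSeries a b c)) := by
  rw [sub_mul, one_mul]
  ext k
  cases k with
  | zero => simp [constantCoeff_gaussSeries]
  | succ k =>
    have hk : (k + 1 : K) ≠ 0 := k.cast_add_one_ne_zero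
    have hck := hc k
    have hpc := eval_ascPochhammer_ne_zero hc k
    have hka : (ascPochhammer K (k + 1)).eval (a - 1) = (a - 1) * (ascPochhammer K k).eval a := by
      rw [eval_ascPochhammer_succ_left, sub_add_cancel]
    have hkb : b * (ascPochhammer K (k + 1)).eval (b + 1)
        = (ascPochhammer K k).eval b * (b + k) * (b + k + 1) := by
      rw [mul_eval_ascPochhammer_add_one, ascPochhammer_succ_eval]
      push_cast
      ring
    simp only [map_sub, coeff_smul, coeff_succ_X_mul, coeff_X_mul_derivative,
      coeff_derivative, coeff_gaussSeries, hka, ascPochhammer_succ_eval k a,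
      ascPochhammer_succ_eval k b, ascPochhammer_succ_eval k c,
      Nat.factorial_succ, Nat.cast_mul, Nat.cast_succ, smul_eq_mul]
    field_simp
    linear_combination (c - a) * (a - 1) * ((ascPochhammer K k).eval a / k !) * hkb

theorem gaussSeries_contiguous (a b : K) {c : K} (hc : ∀ k : ℕ, c + k ≠ 0) :
    ((a - b + 1) * (b * (c - a))) • (gaussSeries (a - 1) (b + 1) c - gaussSeries a b c)
      - ((b - a + 1) * (a * (c - b))) • (gaussSeries (a + 1) (b - 1) c - gaussSeries a b c)
      = ((b - a + 1) * (a - b + 1) * (a - b)) • (X * gaussSeries a b c) := by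
  have hraise := smul_gaussSeries_sub_one_add_one_sub a b hc
  have hlower := smul_gaussSeries_sub_one_add_one_sub b a hc
  rw [gaussSeries_comm b a, gaussSeries_comm (b - 1)] at hlower
  linear_combination (norm := algebra) (a - b + 1) • hraise - (b - a + 1) • hlower

theorem hypergeometricOperator_gaussSeries (a b : K) {c : K} (hc : ∀ k : ℕ, c + k ≠ 0) :
    hypergeometricOperator a b c (gaussSeries a b c) = 0 := by
  ext k
  rw [coeff_hypergeometricOperator, coeff_succ_gaussSeries a b (hc k), sub_self, map_zero]

theorem eq_smul_gaussSeries_of_hypergeometricOperator_eq_zero {a b c : K}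
    (hc : ∀ k : ℕ, c + k ≠ 0) {f : K⟦X⟧} (hf : hypergeometricOperator a b c f = 0) :
    f = constantCoeff f • gaussSeries a b c :=
  eq_smul_gaussSeries hc fun k => by
    rw [← sub_eq_zero, ← coeff_hypergeometricOperator, hf, map_zero]

theorem one_sub_X_mul_derivative_oneSubPow (s : K) :
    (1 - X) * d⁄dX K (oneSubPow s) = -s • oneSubPow s := by
  ext k
  have hk : (1 + k : K) ≠ 0 := add_comm (k : K) 1 ▸ k.cast_add_one_ne_zero
  rw [coeff_one_sub_X_mul_derivative, coeff_smul, smul_eq_mul]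
  have hcoeff := coeff_succ_gaussSeries (-s) 1 hk
  rw [← oneSubPow] at hcoeff
  refine mul_left_cancel₀ hk ?_
  linear_combination hcoeff

theorem eq_smul_oneSubPow {s : K} {f : K⟦X⟧} (hf : (1 - X) * d⁄dX K f = -s • f) :
    f = constantCoeff f • oneSubPow s := by
  refine eq_smul_gaussSeries (fun k => ?_) fun k => ?_
  · exact add_comm (k : K) 1 ▸ k.cast_add_one_ne_zero
  · have hcoeff := congrArg (coeff k) hf
    rw [coeff_one_sub_X_mul_derivative, coeff_smul, smul_eq_mul] at hcoeff
    linear_combination (1 + k) * hcoeff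

theorem one_sub_X_mul_oneSubPow (s : K) : (1 - X) * oneSubPow s = oneSubPow (s + 1) := by
  have hs := one_sub_X_mul_derivative_oneSubPow s
  have hode : (1 - X) * d⁄dX K ((1 - X) * oneSubPow s) = -(s + 1) • ((1 - X) * oneSubPow s) := by
    simp only [Derivation.leibniz, map_sub, Derivation.map_one_eq_zero, derivative_X, smul_eq_mul]
    linear_combination (norm := algebra) (1 - X) * hs
  simpa [constantCoeff_oneSubPow] using eq_smul_oneSubPow hode

theorem gaussSeries_euler (a b : K) {c : K} (hc : ∀ k : ℕ, c + k ≠ 0) :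
    gaussSeries (c - a) (c - b) c = oneSubPow (a + b - c) * gaussSeries a b c := by
  have hB := one_sub_X_mul_derivative_oneSubPow (a + b - c)
  have hF := hypergeometricOperator_gaussSeries a b hc
  set B := oneSubPow (a + b - c) with hBdef
  set F := gaussSeries a b c with hFdef
  have hB' := congrArg (d⁄dX K) hB
  rw [Derivation.leibniz, Derivation.map_smul] at hB'
  have hode : hypergeometricOperator (c - a) (c - b) c (B * F) = 0 := by
    simp only [hypergeometricOperator, Derivation.leibniz, map_add, map_sub,
      Derivation.map_one_eq_zero, derivative_X, smul_eq_mul] at hF hB' ⊢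
    linear_combination (norm := algebra) X * F * hB' + 2 * X * d⁄dX K F * hB + c • F * hB + B * hF
  have hconst : constantCoeff (B * F) = 1 := by
    rw [map_mul, hBdef, hFdef, constantCoeff_oneSubPow, constantCoeff_gaussSeries, one_mul]
  rw [eq_smul_gaussSeries_of_hypergeometricOperator_eq_zero hc hode, hconst, one_smul]

theorem gaussSeries_wronskian (a b : K) {c : K} (hc : ∀ k : ℕ, c + k ≠ 0)
    (hc' : ∀ k : ℕ, 2 - c + k ≠ 0) :
    gaussSeries a b c * (X * d⁄dX K (gaussSeries (a - c + 1) (b - c + 1) (2 - c)))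
      - gaussSeries (a - c + 1) (b - c + 1) (2 - c) * (X * d⁄dX K (gaussSeries a b c))
      + (1 - c) • (gaussSeries a b c * gaussSeries (a - c + 1) (b - c + 1) (2 - c))
    = (1 - c) • oneSubPow (c - a - b - 1) := by
  have hU := hypergeometricOperator_gaussSeries a b hc
  have hY := hypergeometricOperator_gaussSeries (a - c + 1) (b - c + 1) hc'
  have hU₀ := constantCoeff_gaussSeries a b c
  have hY₀ := constantCoeff_gaussSeries (a - c + 1) (b - c + 1) (2 - c)
  generalize gaussSeries a b c = U at *
  generalize gaussSeries (a - c + 1) (b - c + 1) (2 - c) = Y at *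
  have hode : (1 - X) * d⁄dX K (U * (X * d⁄dX K Y) - Y * (X * d⁄dX K U) + (1 - c) • (U * Y))
      = -(c - a - b - 1) • (U * (X * d⁄dX K Y) - Y * (X * d⁄dX K U) + (1 - c) • (U * Y)) := by
    simp only [hypergeometricOperator, Derivation.leibniz, map_add, map_sub, Derivation.map_smul,
      derivative_X, smul_eq_mul] at hU hY ⊢
    linear_combination (norm := algebra) U * hY - Y * hU
  rw [eq_smul_oneSubPow hode]
  simp [hU₀, hY₀]

end GaussSeries

section AssociatedJacobi

open PowerSeries Nat

variable {K : Type*} [Field K]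

/-- The normalizing constant of `assocJacobi`: the product of the prefactors of `Ũ_n^{(α,β)}(x; c)`
and `U_n^{(α,β)}(x; c)`, after cancelling `(c+1)_n`. -/
def assocJacobiCoeff (α β c : K) (n : ℕ) : K :=
  (-1) ^ n * (ascPochhammer K n).eval (β + c + 1) * (ascPochhammer K n).eval (α + β + c + 1)
    / (ascPochhammer K (2 * n)).eval (α + β + 2 * c + 1)

/-- The solution `Ũ_n^{(α,β)}(X; c)` of the associated Jacobi recurrence. The second solution
`Ỹ_n^{(α,β)}(X; c)` is `assocJacobi α (-β) (c + β) n`. -/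
def assocJacobi (α β c : K) (n : ℕ) : K⟦X⟧ :=
  assocJacobiCoeff α β c n • gaussSeries (-n - c) (n + α + β + c + 1) (1 + β)

/-- The diagonal coefficient of the monic Jacobi recurrence on `[0, 1]` with a possibly non-integral
degree `N`; the associated Jacobi recurrence has `N = n + c`. -/
def jacobiDiag (α β N : K) : K :=
  (1 + (β ^ 2 - α ^ 2) / ((2 * N + α + β) * (2 * N + α + β + 2))) / 2

/-- The off-diagonal coefficient of the monic Jacobi recurrence on `[0, 1]` with a possibly
non-integral degree `N`. -/
def jacobiOffDiag (α β N : K) : K :=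
  N * (N + α) * (N + β) * (N + α + β)
    / ((2 * N + α + β - 1) * (2 * N + α + β) ^ 2 * (2 * N + α + β + 1))

theorem jacobiDiag_neg (α β N : K) : jacobiDiag α (-β) (N + β) = jacobiDiag α β N := by
  rw [jacobiDiag, jacobiDiag, neg_sq, show 2 * (N + β) + α + -β = 2 * N + α + β by ring]

theorem jacobiOffDiag_neg (α β N : K) :
    jacobiOffDiag α (-β) (N + β) = jacobiOffDiag α β N := by
  rw [jacobiOffDiag, jacobiOffDiag, show 2 * (N + β) + α + -β = 2 * N + α + β by ring]
  ring

theorem assocJacobi_zero (α β c : K) :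
    assocJacobi α β c 0 = gaussSeries (-c) (α + β + c + 1) (1 + β) := by
  simp [assocJacobi, assocJacobiCoeff]

theorem assocJacobiCoeff_succ (α β c : K) (n : ℕ) :
    assocJacobiCoeff α β c (n + 1)
      = -assocJacobiCoeff α β c n * ((β + c + 1 + n) * (α + β + c + 1 + n)
        / ((2 * (n + c) + α + β + 1) * (2 * (n + c) + α + β + 2))) := by
  simp only [assocJacobiCoeff, Nat.mul_add_one, ascPochhammer_succ_eval]
  push_cast
  field

variable [CharZero K] {α β c : K}

theorem assocJacobi_succ_eq_derivative (hβ : ∀ k : ℕ, 1 + β + k ≠ 0) {n : ℕ}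
    (h₁ : 2 * (n + c) + α + β + 1 ≠ 0) (h₂ : 2 * (n + c) + α + β + 2 ≠ 0) :
    -(2 * (n + c) + α + β + 1) • assocJacobi α β c (n + 1)
      = ((n + α + β + c + 1) * (n + β + c + 1) / (2 * (n + c) + α + β + 2)) • assocJacobi α β c n
        + (1 - X) * (X * d⁄dX K (assocJacobi α β c n))
        - (n + α + β + c + 1) • (X * assocJacobi α β c n) := by
  have hraise := smul_gaussSeries_sub_one_add_one_sub (-n - c) (n + α + β + c + 1) hβ
  simp only [assocJacobi, assocJacobiCoeff_succ, Derivation.map_smul]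
  rw [show -((n + 1 : ℕ) : K) - c = -n - c - 1 by push_cast; ring,
    show ((n + 1 : ℕ) : K) + α + β + c + 1 = n + α + β + c + 1 + 1 by push_cast; ring]
  linear_combination
    (norm := (simp only [mul_smul_comm, mul_sub]; match_scalars <;> field_simp <;> ring))
    (assocJacobiCoeff α β c n / (2 * (n + c) + α + β + 2)) • hraise

theorem assocJacobi_succ (hβ : ∀ k : ℕ, 1 + β + k ≠ 0) {n : ℕ}
    (h₀ : 2 * (n + c) + α + β ≠ 0)
    (h₁ : 2 * (n + c) + α + β + 1 ≠ 0) (h₂ : 2 * (n + c) + α + β + 2 ≠ 0) :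
    assocJacobi α β c (n + 1) = X * assocJacobi α β c n
      - jacobiDiag α β (n + c) • assocJacobi α β c n
      + (assocJacobiCoeff α β c n * ((n + c) * (n + α + c)
        / ((2 * (n + c) + α + β) * (2 * (n + c) + α + β + 1))))
        • gaussSeries (1 - n - c) (n + α + β + c) (1 + β) := by
  have hcont := gaussSeries_contiguous (-n - c) (n + α + β + c + 1) hβ
  simp only [assocJacobi, assocJacobiCoeff_succ, jacobiDiag]
  rw [show -((n + 1 : ℕ) : K) - c = -n - c - 1 by push_cast; ring,
    show ((n + 1 : ℕ) : K) + α + β + c + 1 = n + α + β + c + 1 + 1 by push_cast; ring]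
  rw [show -n - c + 1 = 1 - n - c by ring, add_sub_cancel_right,
    show n + α + β + c + 1 - (-n - c) + 1 = 2 * (n + c) + α + β + 2 by ring,
    show (-n - c) * (1 + β - (n + α + β + c + 1)) = (n + c) * (n + α + c) by ring] at hcont
  generalize ht : 2 * (n + c) + α + β = t at *
  linear_combination
    (norm := (simp only [mul_smul_comm]; match_scalars <;> field_simp <;> subst ht <;> ring))
    (assocJacobiCoeff α β c n / (t * (t + 1) * (t + 2))) • hcont

theorem assocJacobi_recurrence (hβ : ∀ k : ℕ, 1 + β + k ≠ 0) (h : ∀ k : ℕ, α + β + 2 * c + k ≠ 0)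
    (n : ℕ) :
    assocJacobi α β c (n + 2) = X * assocJacobi α β c (n + 1)
      - jacobiDiag α β (n + 1 + c) • assocJacobi α β c (n + 1)
      - jacobiOffDiag α β (n + 1 + c) • assocJacobi α β c n := by
  have ht (k : ℕ) : 2 * ((n + 1 : ℕ) + c) + α + β + k ≠ 0 := by
    convert h (2 * (n + 1) + k) using 1
    push_cast
    ring
  have hcoeff : assocJacobiCoeff α β c (n + 1) * (((n + 1 : ℕ) + c) * ((n + 1 : ℕ) + α + c)
      / ((2 * ((n + 1 : ℕ) + c) + α + β) * (2 * ((n + 1 : ℕ) + c) + α + β + 1)))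
      = -jacobiOffDiag α β (n + 1 + c) * assocJacobiCoeff α β c n := by
    rw [assocJacobiCoeff_succ, jacobiOffDiag]
    push_cast
    rw [show 2 * (n + c) + α + β + 1 = 2 * (n + 1 + c) + α + β - 1 by ring,
      show 2 * (n + c) + α + β + 2 = 2 * (n + 1 + c) + α + β by ring]
    generalize 2 * (n + 1 + c) + α + β = t
    field
  have hsucc := assocJacobi_succ hβ (n := n + 1) (by simpa using ht 0) (by simpa using ht 1)
    (by simpa using ht 2)
  rw [hcoeff, mul_smul, show 1 - ((n + 1 : ℕ) : K) - c = -n - c by push_cast; ring,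
    show ((n + 1 : ℕ) : K) + α + β + c = n + α + β + c + 1 by push_cast; ring,
    ← assocJacobi, neg_smul, ← sub_eq_add_neg] at hsucc
  exact_mod_cast hsucc

theorem assocJacobi_neg_recurrence (hβ : ∀ k : ℕ, 1 - β + k ≠ 0)
    (h : ∀ k : ℕ, α + β + 2 * c + k ≠ 0) (n : ℕ) :
    assocJacobi α (-β) (c + β) (n + 2) = X * assocJacobi α (-β) (c + β) (n + 1)
      - jacobiDiag α β (n + 1 + c) • assocJacobi α (-β) (c + β) (n + 1)
      - jacobiOffDiag α β (n + 1 + c) • assocJacobi α (-β) (c + β) n := by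
  rw [← jacobiDiag_neg, ← jacobiOffDiag_neg, add_assoc _ c]
  refine assocJacobi_recurrence (by simpa only [sub_eq_add_neg] using hβ) (fun k => ?_) n
  convert h k using 1
  ring

theorem assocJacobi_casoratian (hβ : ∀ k : ℕ, 1 + β + k ≠ 0) (hβ' : ∀ k : ℕ, 1 - β + k ≠ 0)
    (h₁ : α + β + 2 * c + 1 ≠ 0) (h₂ : α + β + 2 * c + 2 ≠ 0) :
    assocJacobi α β c 0 * assocJacobi α (-β) (c + β) 1
      - assocJacobi α β c 1 * assocJacobi α (-β) (c + β) 0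
      = (β / (α + β + 2 * c + 1)) • oneSubPow (-α) := by
  have hU := assocJacobi_succ_eq_derivative (α := α) (c := c) (n := 0) hβ
    (by convert h₁ using 1; push_cast; ring) (by convert h₂ using 1; push_cast; ring)
  have hY := assocJacobi_succ_eq_derivative (α := α) (β := -β) (c := c + β) (n := 0)
    (by simpa [← sub_eq_add_neg] using hβ')
    (by convert h₁ using 1; push_cast; ring) (by convert h₂ using 1; push_cast; ring)
  have hW := gaussSeries_wronskian (-c) (α + β + c + 1) hβ
    (by simpa only [show 2 - (1 + β) = 1 - β by ring] using hβ')
  have hpow := one_sub_X_mul_oneSubPow (-α - 1)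
  rw [show -c - (1 + β) + 1 = -(c + β) by ring,
    show α + β + c + 1 - (1 + β) + 1 = α + -β + (c + β) + 1 by ring,
    show 2 - (1 + β) = 1 + -β by ring, show 1 + β - -c - (α + β + c + 1) - 1 = -α - 1 by ring,
    ← assocJacobi_zero, ← assocJacobi_zero] at hW
  rw [sub_add_cancel] at hpow
  have hcoeff : ((0 : ℕ) + α + -β + (c + β) + 1) * ((0 : ℕ) + -β + (c + β) + 1)
      / (2 * ((0 : ℕ) + (c + β)) + α + -β + 2)
      = ((0 : ℕ) + α + β + c + 1) * ((0 : ℕ) + β + c + 1) / (2 * ((0 : ℕ) + c) + α + β + 2)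
        - β := by
    push_cast
    grind
  rw [hcoeff, sub_smul] at hY
  refine smul_right_injective _ h₁ ?_
  simp only [smul_smul, mul_div_cancel₀ _ h₁, Nat.cast_zero] at hU hY ⊢
  linear_combination (norm := algebra) assocJacobi α (-β) (c + β) 0 * hU
    - assocJacobi α β c 0 * hY - (1 - X) * hW + β • hpow

end AssociatedJacobi

section AtkinSeries

open PowerSeries Nat

/-- The formal power series `Ũ_n^{(1/2,-2/3)}(X; 7/12)`. -/
def atkinU (n : ℕ) : ℝ⟦X⟧ := assocJacobi (1 / 2) (-2 / 3) (7 / 12) n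

/-- The formal power series `Ỹ_n^{(1/2,-2/3)}(X; 7/12)`, see `atkinY_eq_assocJacobi`. -/
def atkinY (n : ℕ) : ℝ⟦X⟧ := assocJacobi (1 / 2) (2 / 3) (-1 / 12) n

/-- The power series of `C(x)`. -/
def atkinC : ℝ⟦X⟧ :=
  (-(1 / 60) : ℝ) • ((24 : ℝ) • gaussSeries (-5 / 12) (-5 / 12) (-1 / 3)
    + gaussSeries (-5 / 12) (-5 / 12) (2 / 3))

/-- The power series of `D(x)`. -/
def atkinD : ℝ⟦X⟧ :=
  (91 / 384 : ℝ) • (X * ((4 : ℝ) • gaussSeries (-1 / 12) (-1 / 12) (1 / 3)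
    - (5 : ℝ) • gaussSeries (11 / 12) (-1 / 12) (4 / 3)))

/-- The formal combination `C Ũ_n + D Ỹ_n`, the power series of `𝓐_{n+1}`. -/
def atkinSeries (n : ℕ) : ℝ⟦X⟧ := atkinC * atkinU n + atkinD * atkinY n

theorem atkinY_eq_assocJacobi (n : ℕ) :
    atkinY n = assocJacobi (1 / 2) (-(-2 / 3)) (7 / 12 + -2 / 3) n := by
  norm_num [atkinY]

theorem neg_one_third_add_natCast_ne_zero (k : ℕ) : (-1 / 3 : ℝ) + k ≠ 0 := fun h => by
  have hk : (3 * k : ℝ) = 1 := by linarith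
  norm_cast at hk
  omega

theorem atkinU_zero : atkinU 0 = gaussSeries (-7 / 12) (17 / 12) (1 / 3) := by
  rw [atkinU, assocJacobi_zero]
  norm_num

theorem atkinY_zero : atkinY 0 = gaussSeries (1 / 12) (25 / 12) (5 / 3) := by
  rw [atkinY, assocJacobi_zero]
  norm_num

theorem atkinU_one : atkinU 1 = X * atkinU 0 - (115 / 216 : ℝ) • atkinU 0
    + (91 / 288 : ℝ) • gaussSeries (5 / 12) (5 / 12) (1 / 3) := by
  have h := assocJacobi_succ (α := (1 / 2 : ℝ)) (β := -2 / 3) (c := 7 / 12) (n := 0)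
    (fun k => by norm_num; positivity) (by norm_num) (by norm_num) (by norm_num)
  norm_num [assocJacobiCoeff, jacobiDiag] at h
  norm_num [atkinU, h]

theorem atkinY_one : atkinY 1 = X * atkinY 0 - (115 / 216 : ℝ) • atkinY 0
    - (5 / 288 : ℝ) • gaussSeries (13 / 12) (13 / 12) (5 / 3) := by
  have h := assocJacobi_succ (α := (1 / 2 : ℝ)) (β := 2 / 3) (c := -1 / 12) (n := 0)
    (fun k => by positivity) (by norm_num) (by norm_num) (by norm_num)
  norm_num [assocJacobiCoeff, jacobiDiag] at h
  norm_num [atkinY, h, ← sub_eq_add_neg]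

theorem atkin_casoratian :
    atkinU 0 * atkinY 1 - atkinU 1 * atkinY 0 = (-1 / 3 : ℝ) • oneSubPow (-(1 / 2)) := by
  have h := assocJacobi_casoratian (α := (1 / 2 : ℝ)) (β := -2 / 3) (c := 7 / 12)
    (fun k => by norm_num; positivity) (fun k => by norm_num; positivity)
    (by norm_num) (by norm_num)
  norm_num [atkinU, atkinY] at h ⊢
  exact h

/- Up to the factor `-1/3` of the Casoratian, the right-hand sides of this lemma and of
`atkinC_mul_oneSubPow` are the numerators of Cramer's rule for `C Ũ_i + D Ỹ_i = 𝓐_{i+1}`,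
`i = 0, 1`, simplified with `atkinU_one`, `atkinY_one` and
`𝓐_2 = (X - 115/216) 𝓐_1 - 455/3456`. -/
theorem atkinD_mul_oneSubPow :
    atkinD * oneSubPow (-(1 / 2)) = (455 / 1152 : ℝ) • atkinU 0
      + (91 / 96 : ℝ) • ((X - (5 / 12 : ℝ) • 1) * gaussSeries (5 / 12) (5 / 12) (1 / 3)) := by
  have h₁ := gaussSeries_euler (-1 / 12 : ℝ) (-1 / 12) (c := 1 / 3) fun k => by positivity
  have h₂ := gaussSeries_euler (11 / 12 : ℝ) (-1 / 12) (c := 4 / 3) fun k => by positivity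
  have hcont := gaussSeries_add_one_sub_gaussSeries_add_one (-7 / 12 : ℝ) (5 / 12) (1 / 3)
  norm_num at h₁ h₂ hcont
  norm_num [atkinD, atkinU_zero]
  linear_combination (norm := algebra) (-91 / 96 : ℝ) • (X * h₁) + (455 / 384 : ℝ) • (X * h₂)
    + (455 / 1152 : ℝ) • hcont

theorem atkinC_mul_oneSubPow_eq_gaussSeries :
    atkinC * oneSubPow (-(1 / 2)) = (-(1 / 60) : ℝ) •
      ((24 : ℝ) • gaussSeries (1 / 12) (1 / 12) (-1 / 3)
        + (1 - X) * gaussSeries (13 / 12) (13 / 12) (2 / 3)) := by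
  have h₁ := gaussSeries_euler (-5 / 12 : ℝ) (-5 / 12) neg_one_third_add_natCast_ne_zero
  have h₂ := gaussSeries_euler (-5 / 12 : ℝ) (-5 / 12) (c := 2 / 3) fun k => by positivity
  have hpow := one_sub_X_mul_oneSubPow (-(3 / 2) : ℝ)
  norm_num at h₁ h₂ hpow
  rw [neg_div 3 (1 : ℝ), h₁, h₂, ← hpow, atkinC]
  norm_num
  algebra

theorem atkinC_mul_oneSubPow :
    atkinC * oneSubPow (-(1 / 2)) = (-455 / 1152 : ℝ) • atkinY 0
      + (5 / 96 : ℝ) • ((X - (5 / 12 : ℝ) • 1) * gaussSeries (13 / 12) (13 / 12) (5 / 3)) := by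
  have hlower := smul_gaussSeries_eq_derivative_add_one (1 / 12 : ℝ) (1 / 12)
    neg_one_third_add_natCast_ne_zero
  have hshift := X_mul_derivative_gaussSeries_add_smul (13 / 12 : ℝ) (13 / 12) (c := 5 / 3)
    fun k => by norm_num; positivity
  have hode := hypergeometricOperator_gaussSeries (13 / 12 : ℝ) (13 / 12) (c := 5 / 3)
    fun k => by positivity
  have hraise := smul_gaussSeries_sub_one_add_one_sub (13 / 12 : ℝ) (13 / 12) (c := 5 / 3)
    fun k => by positivity
  norm_num [← atkinY_zero] at hlower hshift hraise
  rw [atkinC_mul_oneSubPow_eq_gaussSeries, neg_div 3 (1 : ℝ)]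
  generalize gaussSeries (13 / 12 : ℝ) (13 / 12) (5 / 3) = Y at *
  have hN : gaussSeries (13 / 12) (13 / 12) (2 / 3) = Y + (3 / 2 : ℝ) • (X * d⁄dX ℝ Y) := by
    linear_combination (norm := algebra) (-3 / 2 : ℝ) • hshift
  rw [hN] at hlower ⊢
  simp only [hypergeometricOperator, Derivation.map_smul, Derivation.leibniz, map_add,
    derivative_X, smul_eq_mul] at hode hlower
  linear_combination (norm := algebra) (6 / 5 : ℝ) • hlower + (9 / 5 : ℝ) • (X * hode)
    + (5 / 8 : ℝ) • hraise

theorem atkinSeries_zero : atkinSeries 0 = X - (5 / 12 : ℝ) • 1 := by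
  refine mul_right_cancel₀ (oneSubPow_ne_zero (-(1 / 2))) ?_
  have hcas := atkin_casoratian
  rw [atkinU_one, atkinY_one] at hcas
  rw [atkinSeries]
  linear_combination (norm := algebra) atkinU 0 * atkinC_mul_oneSubPow
    + atkinY 0 * atkinD_mul_oneSubPow - (3 : ℝ) • ((X - (5 / 12 : ℝ) • 1) * hcas)

theorem atkinSeries_one :
    atkinSeries 1 = X ^ 2 - (205 / 216 : ℝ) • X + (935 / 10368 : ℝ) • 1 := by
  refine mul_right_cancel₀ (oneSubPow_ne_zero (-(1 / 2))) ?_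
  have hzero := atkinSeries_zero
  have hcas := atkin_casoratian
  rw [atkinU_one, atkinY_one] at hcas
  rw [atkinSeries] at hzero ⊢
  rw [atkinU_one, atkinY_one]
  linear_combination (norm := algebra)
    (X - (115 / 216 : ℝ) • 1) * oneSubPow (-(1 / 2)) * hzero
    + (91 / 288 : ℝ) • (gaussSeries (5 / 12) (5 / 12) (1 / 3) * atkinC_mul_oneSubPow)
    - (5 / 288 : ℝ) • (gaussSeries (13 / 12) (13 / 12) (5 / 3) * atkinD_mul_oneSubPow)
    + (455 / 1152 : ℝ) • hcas

theorem jacobiDiag_atkin {m : ℝ} (h₁ : 2 * m - 1 ≠ 0) (h₂ : 2 * m + 1 ≠ 0) :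
    jacobiDiag (1 / 2) (-2 / 3) (m - 5 / 12) = 2 * (m ^ 2 - 29 / 144) / (4 * m ^ 2 - 1) := by
  rw [jacobiDiag, show 4 * m ^ 2 - 1 = (2 * m - 1) * (2 * m + 1) by ring,
    show 2 * (m - 5 / 12) + 1 / 2 + -2 / 3 = 2 * m - 1 by ring,
    show 2 * m - 1 + 2 = 2 * m + 1 by ring]
  field

theorem jacobiOffDiag_atkin (m : ℝ) :
    jacobiOffDiag (1 / 2) (-2 / 3) (m - 5 / 12)
      = (m - 13 / 12) * (m - 7 / 12) * (m - 5 / 12) * (m + 1 / 12)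
        / (2 * m * (2 * m - 1) ^ 2 * (2 * m - 2)) := by
  rw [jacobiOffDiag]
  ring_nf

theorem atkinSeries_add_two (n : ℕ) :
    atkinSeries (n + 2) = X * atkinSeries (n + 1)
      - jacobiDiag (1 / 2) (-2 / 3) (n + 2 - 5 / 12 : ℝ) • atkinSeries (n + 1)
      - jacobiOffDiag (1 / 2) (-2 / 3) (n + 2 - 5 / 12 : ℝ) • atkinSeries n := by
  have hc (k : ℕ) : (1 / 2 + -2 / 3 + 2 * (7 / 12) + k : ℝ) ≠ 0 := by norm_num; positivity
  have hU := assocJacobi_recurrence (fun k => by norm_num; positivity) hc n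
  have hY := assocJacobi_neg_recurrence (fun k => by norm_num; positivity) hc n
  rw [show (n + 1 + 7 / 12 : ℝ) = n + 2 - 5 / 12 by ring] at hU hY
  simp only [atkinSeries, atkinU, atkinY_eq_assocJacobi]
  linear_combination (norm := algebra) atkinC * hU + atkinD * hY

end AtkinSeries

section Evaluation

open PowerSeries Nat
open Finset (HasAntidiagonal)

/-- The power series `f` converges absolutely at `x`, with sum `y`. Absolute convergence is what
makes the notion stable under products. -/
structure HasAbsSum {𝕜 : Type*} [NormedField 𝕜] (f : 𝕜⟦X⟧) (x y : 𝕜) : Prop where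
  summable_norm : Summable fun k => ‖coeff k f * x ^ k‖
  hasSum : HasSum (fun k => coeff k f * x ^ k) y

namespace HasAbsSum

variable {𝕜 : Type*} [NormedField 𝕜] {f g : 𝕜⟦X⟧} {x y z : 𝕜}

theorem unique (hy : HasAbsSum f x y) (hz : HasAbsSum f x z) : y = z :=
  hy.hasSum.unique hz.hasSum

theorem of_summable_norm [CompleteSpace 𝕜] (hf : Summable fun k => ‖coeff k f * x ^ k‖) :
    HasAbsSum f x (∑' k, coeff k f * x ^ k) :=
  ⟨hf, hf.of_norm.hasSum⟩

theorem smul (r : 𝕜) (hf : HasAbsSum f x y) : HasAbsSum (r • f) x (r * y) where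
  summable_norm := by simpa [mul_assoc] using hf.summable_norm.mul_left ‖r‖
  hasSum := by simpa [mul_assoc] using hf.hasSum.mul_left r

theorem add (hf : HasAbsSum f x y) (hg : HasAbsSum g x z) : HasAbsSum (f + g) x (y + z) where
  summable_norm := .of_nonneg_of_le (fun _ => norm_nonneg _)
    (fun k => by simpa [add_mul] using norm_add_le (coeff k f * x ^ k) (coeff k g * x ^ k))
    (hf.summable_norm.add hg.summable_norm)
  hasSum := by simpa [add_mul] using hf.hasSum.add hg.hasSum

theorem sub (hf : HasAbsSum f x y) (hg : HasAbsSum g x z) : HasAbsSum (f - g) x (y - z) := by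
  simpa [sub_eq_add_neg] using hf.add (hg.smul (-1))

theorem mul [CompleteSpace 𝕜] (hf : HasAbsSum f x y) (hg : HasAbsSum g x z) :
    HasAbsSum (f * g) x (y * z) := by
  have hcoeff (k : ℕ) : coeff k (f * g) * x ^ k
      = ∑ p ∈ HasAntidiagonal.antidiagonal k,
          coeff p.1 f * x ^ p.1 * (coeff p.2 g * x ^ p.2) := by
    rw [coeff_mul, Finset.sum_mul]
    refine Finset.sum_congr rfl fun p hp => ?_
    rw [← HasAntidiagonal.mem_antidiagonal.mp hp]
    ring
  have hsummable : Summable fun k => ‖coeff k (f * g) * x ^ k‖ := by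
    simpa only [hcoeff] using
      summable_norm_sum_mul_antidiagonal_of_summable_norm hf.summable_norm hg.summable_norm
  refine ⟨hsummable, ?_⟩
  have hprod :=
    tsum_mul_tsum_eq_tsum_sum_antidiagonal_of_summable_norm hf.summable_norm hg.summable_norm
  rw [hf.hasSum.tsum_eq, hg.hasSum.tsum_eq] at hprod
  simp only [hprod, ← hcoeff]
  exact hsummable.of_norm.hasSum

theorem one (x : 𝕜) : HasAbsSum 1 x 1 where
  summable_norm := summable_of_ne_finset_zero (s := {0}) fun k hk => by
    simp [coeff_one, Finset.notMem_singleton.mp hk]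
  hasSum := by
    have h := hasSum_single (f := fun k => coeff k (1 : 𝕜⟦X⟧) * x ^ k) 0 fun k hk => by
      simp [coeff_one, hk]
    simpa using h

theorem X (x : 𝕜) : HasAbsSum PowerSeries.X x x where
  summable_norm := summable_of_ne_finset_zero (s := {1}) fun k hk => by
    simp [coeff_X, Finset.notMem_singleton.mp hk]
  hasSum := by
    have h := hasSum_single (f := fun k => coeff k (PowerSeries.X : 𝕜⟦X⟧) * x ^ k) 1 fun k hk => by
      simp [coeff_X, hk]
    simpa using h

end HasAbsSum

theorem one_le_ordinaryHypergeometricSeries_radius {𝕜 : Type*} [RCLike 𝕜] (a b c : 𝕜) :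
    1 ≤ (ordinaryHypergeometricSeries 𝕜 a b c).radius := by
  by_cases h : ∀ k : ℕ, (k : 𝕜) ≠ -a ∧ (k : 𝕜) ≠ -b ∧ (k : 𝕜) ≠ -c
  · exact (ordinaryHypergeometricSeries_radius_eq_one 𝕜 a b c h).ge
  · simp only [not_forall, not_and_or, not_not] at h
    obtain ⟨k, h | h | h⟩ := h <;>
      simp [← neg_eq_iff_eq_neg.mpr h, ordinaryHypergeometric_radius_top_of_neg_nat₁,
        ordinaryHypergeometric_radius_top_of_neg_nat₂,
        ordinaryHypergeometric_radius_top_of_neg_nat₃]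

theorem hasAbsSum_gaussSeries {𝕜 : Type*} [RCLike 𝕜] (a b c : 𝕜) {x : 𝕜} (hx : ‖x‖ < 1) :
    HasAbsSum (gaussSeries a b c) x (∑' k, coeff k (gaussSeries a b c) * x ^ k) := by
  refine .of_summable_norm ?_
  have hmem : x ∈ Metric.eball 0 (ordinaryHypergeometricSeries 𝕜 a b c).radius := by
    refine Metric.eball_subset_eball (one_le_ordinaryHypergeometricSeries_radius a b c) ?_
    rwa [mem_eball_zero_iff, ← ofReal_norm, ENNReal.ofReal_lt_one]
  simpa [ordinaryHypergeometricSeries, gaussSeries, mul_comm] using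
    (ordinaryHypergeometricSeries 𝕜 a b c).summable_norm_apply hmem

theorem poch_eq_eval_ascPochhammer (a : ℝ) (n : ℕ) : poch a n = (ascPochhammer ℝ n).eval a := by
  induction n with
  | zero => simp [poch]
  | succ n ih => rw [poch, Finset.prod_range_succ, ← poch, ih, ascPochhammer_succ_eval]

theorem hyp_eq_tsum_coeff (a b c x : ℝ) :
    hyp a b c x = ∑' k, coeff k (gaussSeries a b c) * x ^ k := by
  simp only [hyp, poch_eq_eval_ascPochhammer, coeff_gaussSeries]

variable {x : ℝ}

theorem hasAbsSum_gaussSeries_hyp (a b c : ℝ) (hx : |x| < 1) :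
    HasAbsSum (gaussSeries a b c) x (hyp a b c x) := by
  rw [hyp_eq_tsum_coeff]
  exact hasAbsSum_gaussSeries a b c hx

theorem hasAbsSum_atkinC (hx : |x| < 1) : HasAbsSum atkinC x (Cfun x) :=
  (((hasAbsSum_gaussSeries_hyp _ _ _ hx).smul _).add
    (hasAbsSum_gaussSeries_hyp _ _ _ hx)).smul _

theorem hasAbsSum_atkinD (hx : |x| < 1) : HasAbsSum atkinD x (Dfun x) := by
  rw [Dfun, mul_assoc]
  exact ((HasAbsSum.X x).mul (((hasAbsSum_gaussSeries_hyp _ _ _ hx).smul _).sub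
    ((hasAbsSum_gaussSeries_hyp _ _ _ hx).smul _))).smul _

theorem hasAbsSum_assocJacobi_Ut (α β : ℝ) {c : ℝ} {n : ℕ} (hc : poch (c + 1) n ≠ 0)
    (hx : |x| < 1) : HasAbsSum (assocJacobi α β c n) x (Ut α β c n x) := by
  have hUt : Ut α β c n x = assocJacobiCoeff α β c n
      * hyp (-n - c) (n + α + β + c + 1) (1 + β) x := by
    simp only [Ut, Ufun, assocJacobiCoeff, ← poch_eq_eval_ascPochhammer]
    field
  rw [hUt]
  exact (hasAbsSum_gaussSeries_hyp _ _ _ hx).smul _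

theorem hasAbsSum_assocJacobi_Yt {α β c : ℝ} {n : ℕ} (hαβ : poch (α + β + c + 1) n ≠ 0)
    (hx : |x| < 1) : HasAbsSum (assocJacobi α (-β) (c + β) n) x (Yt α β c n x) := by
  have hYt : Yt α β c n x = assocJacobiCoeff α (-β) (c + β) n
      * hyp (-n - (c + β)) (n + α + -β + (c + β) + 1) (1 + -β) x := by
    rw [Yt, Yfun, assocJacobiCoeff]
    simp only [← poch_eq_eval_ascPochhammer]
    rw [show -β + (c + β) + 1 = c + 1 by ring, show α + -β + (c + β) + 1 = α + c + 1 by ring,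
      show α + -β + 2 * (c + β) + 1 = α + β + 2 * c + 1 by ring,
      show -n - (c + β) = -n - β - c by ring, show n + α + -β + (c + β) + 1 = n + α + c + 1 by ring,
      ← sub_eq_add_neg]
    field
  rw [hYt]
  exact (hasAbsSum_gaussSeries_hyp _ _ _ hx).smul _

theorem hasAbsSum_atkinSeries_CU_add_DY (n : ℕ) (hx : |x| < 1) : HasAbsSum (atkinSeries n) x
    (Cfun x * Ut (1 / 2) (-2 / 3) (7 / 12) n x + Dfun x * Yt (1 / 2) (-2 / 3) (7 / 12) n x) := by
  have hU : poch (7 / 12 + 1) n ≠ 0 := by unfold poch; positivity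
  have hY : poch (1 / 2 + -2 / 3 + 7 / 12 + 1) n ≠ 0 := by norm_num; unfold poch; positivity
  rw [atkinSeries, atkinU, atkinY_eq_assocJacobi]
  exact ((hasAbsSum_atkinC hx).mul (hasAbsSum_assocJacobi_Ut _ _ hU hx)).add
    ((hasAbsSum_atkinD hx).mul (hasAbsSum_assocJacobi_Yt hY hx))

theorem hasAbsSum_atkinSeries_Atkin (x : ℝ) : ∀ n, HasAbsSum (atkinSeries n) x (Atkin (n + 1) x)
  | 0 => by
    rw [atkinSeries_zero]
    simpa [Atkin] using (HasAbsSum.X x).sub ((HasAbsSum.one x).smul (5 / 12))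
  | 1 => by
    rw [atkinSeries_one]
    simpa [Atkin, sq] using
      (((HasAbsSum.X x).mul (.X x)).sub ((HasAbsSum.X x).smul (205 / 216))).add
        ((HasAbsSum.one x).smul (935 / 10368))
  | n + 2 => by
    have h₁ : 2 * (n + 2 : ℝ) - 1 ≠ 0 := by ring_nf; positivity
    have h₂ : 2 * (n + 2 : ℝ) + 1 ≠ 0 := by positivity
    have hn := hasAbsSum_atkinSeries_Atkin x n
    have hn' := hasAbsSum_atkinSeries_Atkin x (n + 1)
    rw [atkinSeries_add_two, jacobiDiag_atkin h₁ h₂, jacobiOffDiag_atkin, Atkin, sub_mul x]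
    exact (((HasAbsSum.X x).mul hn').sub (hn'.smul _)).sub (hn.smul _)

end Evaluation

theorem atkin_eq_CU_add_DY_general (n : ℕ) {x : ℝ} (hx : |x| < 1) :
    Atkin (n + 1) x =
      Cfun x * Ut (1 / 2) (-2 / 3) (7 / 12) n x + Dfun x * Yt (1 / 2) (-2 / 3) (7 / 12) n x :=
  (hasAbsSum_atkinSeries_Atkin x n).unique (hasAbsSum_atkinSeries_CU_add_DY n hx)

theorem atkin_eq_CU_add_DY (n : ℕ) (x : ℝ) (hx0 : 0 ≤ x) (hx1 : x < 1) :
    Atkin (n + 1) x =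
      Cfun x * Ut ((1:ℝ)/2) (-(2:ℝ)/3) ((7:ℝ)/12) n x
        + Dfun x * Yt ((1:ℝ)/2) (-(2:ℝ)/3) ((7:ℝ)/12) n x :=
  atkin_eq_CU_add_DY_general n (by rwa [abs_of_nonneg hx0])
end
end
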